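/- Let δ be a real number with 0 < δ ≤ 1/100, and let T = {(k+1/2)·δ : k ∈ ℕ, (k+1/2)·δ ≤ 1/2}. Then Σ_{t∈T} tanh(t)² ≥ |T|/16, where |T| is the cardinality of T. Equivalently, for the target f(x) = tanh(x) on the symmetric grid ±T and the constant reference g(x) = 1/2, the success probability 𝒩_f²/𝒩_g² = (Σ_{t∈T} tanh(t)²)/(|T|/4) is at least 1/4, so a single round of amplitude amplification suffices. -/

import Mathlib

open scoped BigOperators

/-!
Since `sinh t ≥ t` for `t ≥ 0`, the graph of `tanh` on `[0, a]` lies above the line `t / cosh a`, so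
only the mean square of the grid points is needed. For the `N` midpoints `(k + 1/2) δ` that are at
most `a` it equals `(N δ)² / 3 - δ² / 12`, and `N δ > a - δ / 2` because the next midpoint exceeds
`a`; hence it is at least `a (a - δ) / 3`. At `a = 1/2` the resulting bound
`a (a - δ) / (3 cosh² a)` is at least `1/16` for `δ ≤ 1/100`, as `cosh² (1/2) < 1.3`.
-/

lemma eq_range_card_of_isLowerSet {T : Finset ℕ} (hT : IsLowerSet (T : Set ℕ)) :
    T = Finset.range T.card := by
  refine Finset.eq_of_subset_of_card_le (fun k hk ↦ ?_) (Finset.card_range _).le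
  have hsub : Finset.range (k + 1) ⊆ T := fun j hj ↦
    hT (Nat.le_of_lt_succ (Finset.mem_range.1 hj)) hk
  simpa only [Finset.mem_range, Finset.card_range, Nat.succ_le_iff] using Finset.card_le_card hsub

lemma sum_range_add_half_sq {K : Type*} [Field K] [CharZero K] (n : ℕ) :
    ∑ k ∈ Finset.range n, ((k : K) + 1 / 2) ^ 2 = (n : K) ^ 3 / 3 - n / 12 := by
  induction n with
  | zero => simp
  | succ n ih =>
    rw [Finset.sum_range_succ, ih]
    push_cast
    ring

lemma sq_div_cosh_sq_le_tanh_sq {a t : ℝ} (h : |t| ≤ |a|) :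
    t ^ 2 / Real.cosh a ^ 2 ≤ Real.tanh t ^ 2 := by
  have hsinh : t ^ 2 ≤ Real.sinh t ^ 2 :=
    sq_le_sq.2 ((Real.self_le_sinh_iff.2 (abs_nonneg t)).trans_eq (Real.abs_sinh t).symm)
  have hcosh : Real.cosh t ≤ Real.cosh a := Real.cosh_le_cosh.2 h
  have _ : 0 < Real.cosh t := Real.cosh_pos t
  rw [Real.tanh_eq_sinh_div_cosh, div_pow]
  gcongr

lemma cosh_half_sq (x : ℝ) : Real.cosh (x / 2) ^ 2 = (Real.cosh x + 1) / 2 := by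
  have hdouble := Real.cosh_two_mul (x / 2)
  rw [Real.sinh_sq, mul_div_cancel₀ x two_ne_zero] at hdouble
  linarith

lemma cosh_one_half_sq_lt : Real.cosh (1 / 2) ^ 2 < 1.3 := by
  rw [cosh_half_sq, Real.cosh_eq]
  linarith [Real.exp_one_lt_d9, Real.exp_neg_one_lt_d9]

section Midpoints

variable {a δ : ℝ} {T : Finset ℕ}

lemma midpoints_eq_range_card (hδ : 0 ≤ δ)
    (hT : ∀ k : ℕ, k ∈ T ↔ ((k : ℝ) + 1 / 2) * δ ≤ a) : T = Finset.range T.card := by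
  refine eq_range_card_of_isLowerSet fun k j hjk hk ↦ (hT j).2 (le_trans ?_ ((hT k).1 hk))
  gcongr

lemma sub_half_lt_card_mul (hδ : 0 ≤ δ)
    (hT : ∀ k : ℕ, k ∈ T ↔ ((k : ℝ) + 1 / 2) * δ ≤ a) : a - δ / 2 < T.card * δ := by
  have hcard : T.card ∉ T := fun hmem ↦
    Finset.notMem_range_self ((Finset.ext_iff.1 (midpoints_eq_range_card hδ hT) _).1 hmem)
  rw [hT, not_le] at hcard
  linarith

lemma card_mul_le_sum_midpoint_sq (hδ : 0 ≤ δ) (hδa : δ ≤ 2 * a)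
    (hT : ∀ k : ℕ, k ∈ T ↔ ((k : ℝ) + 1 / 2) * δ ≤ a) :
    T.card * (a * (a - δ) / 3) ≤ ∑ k ∈ T, (((k : ℝ) + 1 / 2) * δ) ^ 2 := by
  have hlength : (a - δ / 2) ^ 2 ≤ (T.card * δ) ^ 2 :=
    pow_le_pow_left₀ (by linarith) (sub_half_lt_card_mul hδ hT).le 2
  calc (T.card : ℝ) * (a * (a - δ) / 3)
      = T.card * ((a - δ / 2) ^ 2 / 3 - δ ^ 2 / 12) := by ring
    _ ≤ T.card * ((T.card * δ) ^ 2 / 3 - δ ^ 2 / 12) := by gcongr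
    _ = (∑ k ∈ Finset.range T.card, ((k : ℝ) + 1 / 2) ^ 2) * δ ^ 2 := by
      rw [sum_range_add_half_sq]
      ring
    _ = ∑ k ∈ T, (((k : ℝ) + 1 / 2) * δ) ^ 2 := by
      simp only [← midpoints_eq_range_card hδ hT, Finset.sum_mul, mul_pow]

lemma card_mul_le_sum_tanh_sq (hδ : 0 ≤ δ) (hδa : δ ≤ 2 * a)
    (hT : ∀ k : ℕ, k ∈ T ↔ ((k : ℝ) + 1 / 2) * δ ≤ a) :
    T.card * (a * (a - δ) / (3 * Real.cosh a ^ 2)) ≤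
      ∑ k ∈ T, Real.tanh (((k : ℝ) + 1 / 2) * δ) ^ 2 := by
  have habs : ∀ k ∈ T, |((k : ℝ) + 1 / 2) * δ| ≤ |a| := fun k hk ↦
    abs_le_abs_of_nonneg (by positivity) ((hT k).1 hk)
  calc T.card * (a * (a - δ) / (3 * Real.cosh a ^ 2))
      = T.card * (a * (a - δ) / 3) / Real.cosh a ^ 2 := by ring
    _ ≤ (∑ k ∈ T, (((k : ℝ) + 1 / 2) * δ) ^ 2) / Real.cosh a ^ 2 := by
      gcongr
      exact card_mul_le_sum_midpoint_sq hδ hδa hT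
    _ = ∑ k ∈ T, (((k : ℝ) + 1 / 2) * δ) ^ 2 / Real.cosh a ^ 2 := Finset.sum_div ..
    _ ≤ ∑ k ∈ T, Real.tanh (((k : ℝ) + 1 / 2) * δ) ^ 2 :=
      Finset.sum_le_sum fun k hk ↦ sq_div_cosh_sq_le_tanh_sq (habs k hk)

end Midpoints

lemma one_sixteenth_le_half_mul_half_sub_div_cosh_half_sq {δ : ℝ} (hδ : δ ≤ 1 / 100) :
    1 / 16 ≤ 1 / 2 * (1 / 2 - δ) / (3 * Real.cosh (1 / 2) ^ 2) := by
  rw [le_div_iff₀ (by positivity)]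
  linarith [cosh_one_half_sq_lt]

-- `r` is the constant value of the reference amplitude and `p` the guaranteed success probability.
theorem stmt8_general (δ a r p : ℝ) (hδ : 0 < δ) (hδa : δ ≤ 2 * a) (hr : r ≠ 0)
    (hp : p * r ^ 2 ≤ a * (a - δ) / (3 * Real.cosh a ^ 2))
    (T : Finset ℕ) (hT : ∀ k : ℕ, k ∈ T ↔ ((k : ℝ) + 1 / 2) * δ ≤ a) :
    T.card * (p * r ^ 2) ≤ ∑ k ∈ T, Real.tanh (((k : ℝ) + 1 / 2) * δ) ^ 2 ∧
      p ≤ (∑ k ∈ T, Real.tanh (((k : ℝ) + 1 / 2) * δ) ^ 2) / (T.card * r ^ 2) := by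
  have hsum : T.card * (p * r ^ 2) ≤ ∑ k ∈ T, Real.tanh (((k : ℝ) + 1 / 2) * δ) ^ 2 :=
    (mul_le_mul_of_nonneg_left hp T.card.cast_nonneg).trans (card_mul_le_sum_tanh_sq hδ.le hδa hT)
  have hzero : 0 ∈ T := (hT 0).2 (by push_cast; linarith)
  have hcard : 0 < T.card := Finset.card_pos.2 ⟨0, hzero⟩
  refine ⟨hsum, (le_div_iff₀ (by positivity)).2 (hsum.trans_eq' ?_)⟩
  ring

/-- Success probability for hyperbolic-tangent state preparation: on the positive half
of the symmetric grid `T = {(k+1/2)·δ : (k+1/2)·δ ≤ 1/2}` with `0 < δ ≤ 1/100`,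
`Σ_{t∈T} tanh(t)² ≥ |T|/16`; equivalently, for the target `f = tanh` and the constant
reference `g = 1/2`, the success probability `(Σ_{t∈T} tanh(t)²)/(|T|/4)` is at least
`1/4`. -/
theorem stmt8 (δ : ℝ) (hδ : 0 < δ) (hδ' : δ ≤ 1 / 100)
    (T : Finset ℕ) (hT : ∀ k : ℕ, k ∈ T ↔ ((k : ℝ) + 1 / 2) * δ ≤ 1 / 2) :
    (∑ k ∈ T, Real.tanh (((k : ℝ) + 1 / 2) * δ) ^ 2) ≥ (T.card : ℝ) / 16 ∧
    (∑ k ∈ T, Real.tanh (((k : ℝ) + 1 / 2) * δ) ^ 2) / ((T.card : ℝ) / 4)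
      ≥ 1 / 4 := by
  have hp := one_sixteenth_le_half_mul_half_sub_div_cosh_half_sq hδ'
  convert stmt8_general δ (1 / 2) (1 / 2) (1 / 4) hδ (by linarith) (by norm_num) (by linarith) T hT
    using 2 <;> ring
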